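/- arXiv:2003.07648 — 2 statements merged into one kernel-verified Lean document; each statement's English description precedes it below -/
import Mathlib

section
/- If 0 < β₁ ≤ β₂ and X is an integrable random variable with X ≥ 0 almost surely, then ρ_{φ,β₂}(X) ≤ (β₂/β₁)·ρ_{φ,β₁}(X). -/
open MeasureTheory
open scoped ENNReal

noncomputable section

/-- A divergence function: convex, lower semicontinuous `φ : ℝ → ℝ ∪ {∞}` with `φ 1 = 0`,
effective domain `[0, ∞)` and superlinear growth `φ x / x → ∞` as `x → ∞`. -/
structure IsDivergenceFunction (φ : ℝ → EReal) : Prop where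
  convex : ∀ x y a b : ℝ, 0 < a → 0 < b → a + b = 1 →
    φ (a * x + b * y) ≤ (a : EReal) * φ x + (b : EReal) * φ y
  lsc : LowerSemicontinuous φ
  ne_bot : ∀ x : ℝ, φ x ≠ ⊥
  one : φ 1 = 0
  domain : ∀ x : ℝ, φ x ≠ ⊤ ↔ 0 ≤ x
  superlinear : ∀ M : ℝ, ∃ N : ℝ, ∀ x : ℝ, N ≤ x → ((M * x : ℝ) : EReal) ≤ φ x

/-- The convex conjugate `ψ(y) = sup_z (y·z − φ(z))`, as an extended real number. -/
def psiE (φ : ℝ → EReal) (y : ℝ) : EReal := ⨆ z : ℝ, (((y * z : ℝ) : EReal) - φ z)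

/-- The convex conjugate, as a real number (it is finite for divergence functions). -/
def psiR (φ : ℝ → EReal) (y : ℝ) : ℝ := (psiE φ y).toReal

open Classical in
/-- The objective `t (β + μ + E ψ(X/t − μ))` of the φ-divergence risk measure;
the value is `⊤` when `ψ(X/t − μ)` fails to be integrable. -/
def rhoObj {Ω : Type*} [MeasurableSpace Ω] (φ : ℝ → EReal) (β : ℝ) (P : Measure Ω)
    (X : Ω → ℝ) (μ t : ℝ) : EReal :=
  if Integrable (fun ω => psiR φ (X ω / t - μ)) P then
    (((t * (β + μ + ∫ ω, psiR φ (X ω / t - μ) ∂P)) : ℝ) : EReal)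
  else ⊤

/-- The φ-divergence risk measure `ρ_{φ,β}(X) = inf_{μ ∈ ℝ, t > 0} t (β + μ + E ψ(X/t − μ))`. -/
def rhoDiv {Ω : Type*} [MeasurableSpace Ω] (φ : ℝ → EReal) (β : ℝ) (P : Measure Ω)
    (X : Ω → ℝ) : EReal :=
  ⨅ (μ : ℝ) (t : ℝ) (_ : 0 < t), rhoObj φ β P X μ t

variable {Ω : Type*} [MeasurableSpace Ω]

/-!
The term `z = 1` of the supremum defining `ψ` gives `y ≤ ψ y`, since `φ 1 = 0`. Hence
`E X ≤ t (μ + E ψ(X/t − μ))`: in the objective `t β + t (μ + E ψ(X/t − μ))` the part free of `β`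
is at least `E X`. Multiplying `β` by `c ≥ 1` leaves that part as it is, while multiplying the whole
objective by `c` raises it by at least `(c − 1) E X`, which is nonnegative when `X ≥ 0`.
-/

section Conjugate

variable {φ : ℝ → EReal} {y : ℝ}

theorem le_psiR (h_one : φ 1 ≤ 0) (hψ : psiE φ y ≠ ⊤) : y ≤ psiR φ y := by
  have h_le : (y : EReal) ≤ psiE φ y := calc
    (y : EReal) = ((y * 1 : ℝ) : EReal) - 0 := by rw [mul_one, sub_zero]
    _ ≤ ((y * 1 : ℝ) : EReal) - φ 1 := EReal.sub_le_sub le_rfl h_one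
    _ ≤ psiE φ y := le_iSup (fun z : ℝ => ((y * z : ℝ) : EReal) - φ z) 1
  exact EReal.coe_le_coe_iff.1 (h_le.trans (EReal.le_coe_toReal hψ))

theorem exists_real_forall_le_of_lowerSemicontinuousOn {α : Type*} [TopologicalSpace α]
    {f : α → EReal} {K : Set α} (hK : IsCompact K) (hf : LowerSemicontinuousOn f K)
    (h_bot : ∀ x ∈ K, f x ≠ ⊥) : ∃ m : ℝ, ∀ x ∈ K, (m : EReal) ≤ f x := by
  rcases K.eq_empty_or_nonempty with rfl | h_nonempty
  · exact ⟨0, fun x hx => hx.elim⟩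
  · obtain ⟨x₀, hx₀, h_min⟩ := hf.exists_isMinOn h_nonempty hK
    obtain ⟨m, -, hm⟩ := EReal.lt_iff_exists_real_btwn.1 (bot_lt_iff_ne_bot.2 (h_bot x₀ hx₀))
    exact ⟨m, fun x hx => hm.le.trans (h_min hx)⟩

theorem IsDivergenceFunction.psiE_ne_top (hφ : IsDivergenceFunction φ) (y : ℝ) :
    psiE φ y ≠ ⊤ := by
  obtain ⟨N, hN⟩ := hφ.superlinear y
  obtain ⟨m, hm⟩ := exists_real_forall_le_of_lowerSemicontinuousOn (isCompact_Icc (a := 0) (b := N))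
    (hφ.lsc.lowerSemicontinuousOn _) fun x _ => hφ.ne_bot x
  suffices h_bound : psiE φ y ≤ ((max 0 (|y| * N - m) : ℝ) : EReal) from
    (h_bound.trans_lt (EReal.coe_lt_top _)).ne
  refine iSup_le fun z => ?_
  rcases lt_or_ge z 0 with hz | hz
  · have h_top : φ z = ⊤ := not_not.1 fun h => hz.not_ge ((hφ.domain z).1 h)
    rw [h_top, EReal.sub_top]
    exact bot_le
  rcases le_total N z with hNz | hzN
  · calc ((y * z : ℝ) : EReal) - φ z ≤ 0 := EReal.sub_nonpos.2 (hN z hNz)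
      _ ≤ _ := EReal.coe_le_coe_iff.2 (le_max_left _ _)
  · have h_mul : y * z ≤ |y| * N := mul_le_mul (le_abs_self y) hzN hz (abs_nonneg y)
    calc ((y * z : ℝ) : EReal) - φ z ≤ ((|y| * N : ℝ) : EReal) - (m : EReal) :=
          EReal.sub_le_sub (EReal.coe_le_coe_iff.2 h_mul) (hm z ⟨hz, hzN⟩)
      _ ≤ _ := EReal.coe_le_coe_iff.2 (le_max_right _ _)

end Conjugate

section Scaling

variable {P : Measure Ω} [IsProbabilityMeasure P] {φ : ℝ → EReal} {X : Ω → ℝ} {c t : ℝ}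

theorem integral_le_mul_add_integral_psiR (h_one : φ 1 ≤ 0) (hψ : ∀ y, psiE φ y ≠ ⊤)
    (hX : Integrable X P) (ht : 0 < t) {μ : ℝ}
    (h_int : Integrable (fun ω => psiR φ (X ω / t - μ)) P) :
    ∫ ω, X ω ∂P ≤ t * (μ + ∫ ω, psiR φ (X ω / t - μ) ∂P) := by
  have h_mean : (∫ ω, X ω ∂P) / t - μ ≤ ∫ ω, psiR φ (X ω / t - μ) ∂P := calc
    (∫ ω, X ω ∂P) / t - μ = ∫ ω, (X ω / t - μ) ∂P := by
      rw [integral_sub (hX.div_const t) (integrable_const μ), integral_div, integral_const,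
        probReal_univ, one_smul]
    _ ≤ ∫ ω, psiR φ (X ω / t - μ) ∂P :=
      integral_mono ((hX.div_const t).sub (integrable_const μ)) h_int fun _ =>
        le_psiR h_one (hψ _)
  rw [← div_le_iff₀' ht]
  linarith

theorem rhoObj_mul_add_le (h_one : φ 1 ≤ 0) (hψ : ∀ y, psiE φ y ≠ ⊤) (hc : 1 ≤ c) (β : ℝ)
    (hX : Integrable X P) (μ : ℝ) (ht : 0 < t) :
    rhoObj φ (c * β) P X μ t + (((c - 1) * ∫ ω, X ω ∂P : ℝ) : EReal) ≤
      (c : EReal) * rhoObj φ β P X μ t := by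
  unfold rhoObj
  split_ifs with h_int
  · rw [← EReal.coe_add, ← EReal.coe_mul, EReal.coe_le_coe_iff]
    have h_excess := mul_le_mul_of_nonneg_left
      (integral_le_mul_add_integral_psiR h_one hψ hX ht h_int) (sub_nonneg.2 hc)
    linarith
  · rw [EReal.mul_top_of_pos (EReal.coe_pos.2 (one_pos.trans_le hc))]
    exact le_top

theorem rhoDiv_riskAversion_scaling_general (h_one : φ 1 ≤ 0) (hψ : ∀ y, psiE φ y ≠ ⊤)
    (hc : 1 ≤ c) (β : ℝ) (hX : Integrable X P) :
    rhoDiv φ (c * β) P X + (((c - 1) * ∫ ω, X ω ∂P : ℝ) : EReal) ≤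
      (c : EReal) * rhoDiv φ β P X := by
  have hc_pos : (0 : EReal) < (c : EReal) := EReal.coe_pos.2 (one_pos.trans_le hc)
  rw [← EReal.div_le_iff_le_mul hc_pos (EReal.coe_ne_top c)]
  refine le_iInf fun μ => le_iInf fun t => le_iInf fun ht => ?_
  rw [EReal.div_le_iff_le_mul hc_pos (EReal.coe_ne_top c)]
  have h_inf : rhoDiv φ (c * β) P X ≤ rhoObj φ (c * β) P X μ t :=
    iInf_le_of_le μ (iInf_le_of_le t (iInf_le _ ht))
  exact (add_le_add_left h_inf _).trans (rhoObj_mul_add_le h_one hψ hc β hX μ ht)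

theorem rhoDiv_mul_le_of_integral_nonneg (h_one : φ 1 ≤ 0) (hψ : ∀ y, psiE φ y ≠ ⊤)
    (hc : 1 ≤ c) (β : ℝ) (hX : Integrable X P) (h_mean : 0 ≤ ∫ ω, X ω ∂P) :
    rhoDiv φ (c * β) P X ≤ (c : EReal) * rhoDiv φ β P X :=
  (le_add_of_nonneg_right (EReal.coe_nonneg.2 (mul_nonneg (sub_nonneg.2 hc) h_mean))).trans
    (rhoDiv_riskAversion_scaling_general h_one hψ hc β hX)

end Scaling

/-- For `0 < β₁ ≤ β₂` and `X ≥ 0` a.s.: `ρ_{φ,β₂}(X) ≤ (β₂/β₁)·ρ_{φ,β₁}(X)`. -/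
theorem rhoDiv_riskAversion_scaling (P : Measure Ω) [IsProbabilityMeasure P]
    (φ : ℝ → EReal) (hφ : IsDivergenceFunction φ) (β₁ β₂ : ℝ) (hβ₁ : 0 < β₁)
    (hβ : β₁ ≤ β₂) (X : Ω → ℝ) (hX : Integrable X P) (hX0 : ∀ᵐ ω ∂P, 0 ≤ X ω) :
    rhoDiv φ β₂ P X ≤ ((β₂ / β₁ : ℝ) : EReal) * rhoDiv φ β₁ P X := by
  simpa only [div_mul_cancel₀ β₂ hβ₁.ne'] using
    rhoDiv_mul_le_of_integral_nonneg hφ.one.le hφ.psiE_ne_top ((one_le_div hβ₁).2 hβ) β₁ hX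
      (integral_nonneg_of_ae hX0)
end
end

section
/- Let φ be a divergence function with convex conjugate ψ, and β > 0. For a random variable X, the φ-divergence norm ‖X‖_{φ,β} := ρ_{φ,β}(|X|) is finite if and only if X belongs to the Orlicz space L^ψ, i.e., if and only if E[ψ(t·|X|)] < ∞ for some t > 0. -/
open MeasureTheory
open scoped ENNReal

noncomputable section

variable {Ω : Type*} [MeasurableSpace Ω]

/-!
Finiteness of the infimum only says that `ψ(|X|/t - μ)` is integrable for some `μ` and some `t > 0`,
so an Orlicz bound gives it with `μ = 0`. Conversely, the shift `μ` is removed by convexity: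
`|X|/(2t)` is the midpoint of `|X|/t - μ` and `μ`, so `ψ(|X|/(2t))` lies below an integrable
function, and it lies above the constant `ψ(0)` because `ψ` is nondecreasing (`dom φ ⊆ [0, ∞)`).
-/

lemma exists_coe_le_of_isCompact {α : Type*} [TopologicalSpace α] {f : α → EReal} {K : Set α}
    (hK : IsCompact K) (hf : LowerSemicontinuousOn f K) (hbot : ∀ x ∈ K, f x ≠ ⊥) :
    ∃ m : ℝ, ∀ x ∈ K, (m : EReal) ≤ f x := by
  rcases K.eq_empty_or_nonempty with rfl | hne
  · simp
  · obtain ⟨x₀, hx₀, hmin⟩ := hf.exists_isMinOn hne hK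
    exact ⟨(f x₀).toReal, fun x hx => (EReal.coe_toReal_le (hbot x₀ hx₀)).trans (hmin hx)⟩

lemma integrable_comp_convex_combination {P : Measure Ω} [IsFiniteMeasure P] {g : ℝ → ℝ}
    (hconv : ConvexOn ℝ Set.univ g) (hmono : Monotone g) {a b c : ℝ} (ha : 0 ≤ a) (hb : 0 ≤ b)
    (hab : a + b = 1) {u v : Ω → ℝ} (hmeas : AEMeasurable (fun ω => a * u ω + b * v ω) P)
    (hc : ∀ ω, c ≤ a * u ω + b * v ω) (hu : Integrable (fun ω => g (u ω)) P)
    (hv : Integrable (fun ω => g (v ω)) P) :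
    Integrable (fun ω => g (a * u ω + b * v ω)) P :=
  integrable_of_le_of_le (hmono.measurable.comp_aemeasurable hmeas).aestronglyMeasurable
    (.of_forall fun ω => hmono (hc ω))
    (.of_forall fun _ => hconv.2 trivial trivial ha hb hab)
    (integrable_const (g c)) ((hu.const_mul a).add (hv.const_mul b))

section Conjugate

variable {φ : ℝ → EReal}

lemma psiE_le_coe_iff {y c : ℝ} :
    psiE φ y ≤ c ↔ ∀ z : ℝ, ((y * z - c : ℝ) : EReal) ≤ φ z := by
  refine iSup_le_iff.trans (forall_congr' fun z => ?_)
  rw [EReal.sub_le_iff_le_add (.inr (EReal.coe_ne_top c)) (.inr (EReal.coe_ne_bot c)), add_comm,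
    EReal.coe_sub, EReal.sub_le_iff_le_add (.inl (EReal.coe_ne_bot c)) (.inl (EReal.coe_ne_top c)),
    add_comm]

lemma psiE_ne_bot {z : ℝ} (hz : φ z ≠ ⊤) (y : ℝ) : psiE φ y ≠ ⊥ := by
  intro hbot
  have hle : psiE φ y ≤ ((y * z - (φ z).toReal - 1 : ℝ) : EReal) := hbot ▸ bot_le
  have hYoung := (psiE_le_coe_iff.1 hle z).trans (EReal.le_coe_toReal hz)
  linarith [EReal.coe_le_coe_iff.1 hYoung]

lemma psiE_ne_top_of_isCompact {K : Set ℝ} {y : ℝ} (hK : IsCompact K)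
    (hlsc : LowerSemicontinuousOn φ K) (hbot : ∀ z ∈ K, φ z ≠ ⊥)
    (hcompl : ∀ z ∉ K, ((y * z : ℝ) : EReal) ≤ φ z) : psiE φ y ≠ ⊤ := by
  obtain ⟨m, hm⟩ := exists_coe_le_of_isCompact hK hlsc hbot
  obtain ⟨B, hB⟩ := hK.bddAbove_image (continuous_const_mul y).continuousOn
  suffices h : psiE φ y ≤ ((max 0 (B - m) : ℝ) : EReal) from
    ne_top_of_le_ne_top (EReal.coe_ne_top _) h
  refine psiE_le_coe_iff.2 fun z => ?_
  by_cases hz : z ∈ K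
  · have hyz : y * z ≤ B := hB ⟨z, hz, rfl⟩
    refine le_trans ?_ (hm z hz)
    exact_mod_cast (by linarith [le_max_right 0 (B - m)] : y * z - max 0 (B - m) ≤ m)
  · refine le_trans ?_ (hcompl z hz)
    exact_mod_cast sub_le_self (y * z) (le_max_left 0 (B - m))

lemma psiE_monotone (hneg : ∀ z < 0, φ z = ⊤) : Monotone (psiE φ) := by
  refine fun y₁ y₂ hy => iSup_mono fun z => ?_
  rcases lt_or_ge z 0 with hz | hz
  · simp only [hneg z hz, EReal.sub_top, le_refl]
  · exact EReal.sub_le_sub (EReal.coe_le_coe (mul_le_mul_of_nonneg_right hy hz)) le_rfl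

lemma psiR_monotone (hneg : ∀ z < 0, φ z = ⊤) (hdom : ∃ z, φ z ≠ ⊤) (hψ : ∀ y, psiE φ y ≠ ⊤) :
    Monotone (psiR φ) := by
  obtain ⟨z, hz⟩ := hdom
  exact fun y₁ y₂ hy => EReal.toReal_le_toReal (psiE_monotone hneg hy) (psiE_ne_bot hz y₁) (hψ y₂)

lemma coe_mul_sub_psiR_le {y : ℝ} (hψ : psiE φ y ≠ ⊤) (z : ℝ) :
    ((y * z - psiR φ y : ℝ) : EReal) ≤ φ z :=
  psiE_le_coe_iff.1 (EReal.le_coe_toReal hψ) z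

lemma psiR_le {y c : ℝ} (hdom : ∃ z, φ z ≠ ⊤)
    (h : ∀ z : ℝ, ((y * z - c : ℝ) : EReal) ≤ φ z) : psiR φ y ≤ c := by
  obtain ⟨z, hz⟩ := hdom
  exact EReal.coe_le_coe_iff.1 <|
    (EReal.coe_toReal_le (psiE_ne_bot hz y)).trans (psiE_le_coe_iff.2 h)

lemma convexOn_psiR (hdom : ∃ z, φ z ≠ ⊤) (hψ : ∀ y, psiE φ y ≠ ⊤) :
    ConvexOn ℝ Set.univ (psiR φ) := by
  refine ⟨convex_univ, fun x _ y _ a b ha hb hab => psiR_le hdom fun z => ?_⟩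
  calc (((a • x + b • y) * z - (a • psiR φ x + b • psiR φ y) : ℝ) : EReal)
      = ((a • (x * z - psiR φ x) + b • (y * z - psiR φ y) : ℝ) : EReal) := by
        simp only [smul_eq_mul]
        ring_nf
    _ ≤ ((max (x * z - psiR φ x) (y * z - psiR φ y) : ℝ) : EReal) :=
        EReal.coe_le_coe (Convex.combo_le_max _ _ ha hb hab)
    _ ≤ φ z := by
        rw [EReal.coe_strictMono.monotone.map_max]
        exact max_le (coe_mul_sub_psiR_le (hψ x) z) (coe_mul_sub_psiR_le (hψ y) z)

end Conjugate

lemma rhoDiv_ne_top_iff {φ : ℝ → EReal} {β : ℝ} {P : Measure Ω} {X : Ω → ℝ} :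
    rhoDiv φ β P X ≠ ⊤ ↔
      ∃ μ t : ℝ, 0 < t ∧ Integrable (fun ω => psiR φ (X ω / t - μ)) P := by
  simp only [rhoDiv, rhoObj, ne_eq, iInf_eq_top, ite_eq_right_iff, EReal.coe_ne_top, imp_false,
    not_forall, not_not, exists_prop]

namespace IsDivergenceFunction

variable {φ : ℝ → EReal}

lemma eq_top_of_neg (hφ : IsDivergenceFunction φ) {z : ℝ} (hz : z < 0) : φ z = ⊤ :=
  not_ne_iff.1 fun h => hz.not_ge ((hφ.domain z).1 h)

lemma exists_ne_top (hφ : IsDivergenceFunction φ) : ∃ z, φ z ≠ ⊤ :=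
  ⟨0, (hφ.domain 0).2 le_rfl⟩

lemma psiE_ne_top_s11 (hφ : IsDivergenceFunction φ) (y : ℝ) : psiE φ y ≠ ⊤ := by
  obtain ⟨N, hN⟩ := hφ.superlinear y
  refine psiE_ne_top_of_isCompact (K := Set.Icc 0 N) isCompact_Icc
    (hφ.lsc.lowerSemicontinuousOn _) (fun z _ => hφ.ne_bot z) fun z hz => ?_
  rcases lt_or_ge z 0 with hz0 | hz0
  · exact hφ.eq_top_of_neg hz0 ▸ le_top
  · exact hN z (not_le.1 fun hzN => hz ⟨hz0, hzN⟩).le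

end IsDivergenceFunction

theorem rhoDiv_finite_iff_orlicz_general (P : Measure Ω) [IsFiniteMeasure P] {φ : ℝ → EReal}
    (hneg : ∀ z < 0, φ z = ⊤) (hdom : ∃ z, φ z ≠ ⊤) (hψ : ∀ y, psiE φ y ≠ ⊤) (β : ℝ)
    {X : Ω → ℝ} (hX : AEMeasurable X P) :
    rhoDiv φ β P (fun ω => |X ω|) ≠ ⊤ ↔
      ∃ t : ℝ, 0 < t ∧ Integrable (fun ω => psiR φ (t * |X ω|)) P := by
  rw [rhoDiv_ne_top_iff]
  constructor
  · rintro ⟨μ, t, ht, hI⟩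
    have hmid (ω) : 1 / 2 * (|X ω| / t - μ) + 1 / 2 * μ = (2 * t)⁻¹ * |X ω| := by
      field_simp
      ring
    refine ⟨(2 * t)⁻¹, by positivity, ?_⟩
    simp only [← hmid]
    refine integrable_comp_convex_combination (c := 0) (convexOn_psiR hdom hψ)
      (psiR_monotone hneg hdom hψ) (by norm_num) (by norm_num) (by norm_num) ?_ (fun ω => ?_)
      hI (integrable_const _)
    · simpa only [hmid] using hX.abs.const_mul _
    · rw [hmid]
      positivity
  · rintro ⟨t, ht, hI⟩
    exact ⟨0, t⁻¹, inv_pos.2 ht, by simpa only [sub_zero, div_inv_eq_mul, mul_comm] using hI⟩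

/-- The φ-divergence norm `‖X‖_{φ,β} = ρ_{φ,β}(|X|)` is finite if and only if `X`
belongs to the Orlicz space `L^ψ`, i.e. `E[ψ(t·|X|)] < ∞` for some `t > 0`. -/
theorem rhoDiv_finite_iff_orlicz (P : Measure Ω) [IsProbabilityMeasure P]
    (φ : ℝ → EReal) (hφ : IsDivergenceFunction φ) (β : ℝ) (hβ : 0 < β)
    (X : Ω → ℝ) (hXmeas : Measurable X) :
    rhoDiv φ β P (fun ω => |X ω|) ≠ ⊤ ↔
      ∃ t : ℝ, 0 < t ∧ Integrable (fun ω => psiR φ (t * |X ω|)) P :=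
  rhoDiv_finite_iff_orlicz_general P (fun _ => hφ.eq_top_of_neg) hφ.exists_ne_top
    hφ.psiE_ne_top_s11 β hXmeas.aemeasurable
end
end
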